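/- Every element of the coset A_Λ* = {a∘* : a ∈ A_Λ} ⊆ Aut(W,S) has order at most two (is an involution); moreover A_Λ* = *A_Λ. -/

import Mathlib

set_option synthInstance.maxHeartbeats 1000000
set_option maxHeartbeats 2000000

open scoped Classical

noncomputable section

namespace LY

/-! ## The coefficient field `ℚ(q)` -/

/-- The field `ℚ(q)` of rational functions. -/
abbrev K : Type := RatFunc ℚ

/-- The indeterminate `q`. -/
def qK : K := RatFunc.X

/-- The inclusion `ℤ[q] → ℚ(q)`. -/
def toK (p : Polynomial ℤ) : K := algebraMap (Polynomial ℚ) K (p.map (Int.castRingHom ℚ))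

/-- Evaluation of `p ∈ ℤ[q]` at `−q`, as an element of `ℚ(q)`; i.e. `p(−q)`. -/
def atNegQ (p : Polynomial ℤ) : K := Polynomial.eval₂ (Int.castRingHom K) (-qK) p

/-- The standard basis element `T_w` (resp. `a_w`) of the function model `W → ℚ(q)`
of the Hecke algebra (resp. of the Lusztig–Vogan module `M`). -/
def TT {W : Type} (w : W) : W → K := fun y => if y = w then 1 else 0

variable {B W : Type} [Group W] {M : CoxeterMatrix B}

/-- The Bruhat order on a Coxeter group: `u ≤ v` iff `v` is obtained from `u` by successive
right multiplications by reflections, each increasing the length. -/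
def BruhatLE (cs : CoxeterSystem M W) (u v : W) : Prop :=
  Relation.ReflTransGen
    (fun a b => cs.length a < cs.length b ∧ ∃ t, cs.IsReflection t ∧ b = a * t) u v

/-- Connectedness of the Coxeter diagram of `M`. -/
def DiagramConnected (M : CoxeterMatrix B) : Prop :=
  ∀ i j : B, Relation.ReflTransGen (fun a b => a ≠ b ∧ M a b ≠ 2) i j

/-- An automorphism of `W` preserving the set `S` of simple reflections, i.e. an element
of `A = Aut(W,S)`. -/
def IsDiagAut (cs : CoxeterSystem M W) (a : MulAut W) : Prop :=
  (⇑a) '' (Set.range cs.simple) = Set.range cs.simple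

/-! ## The affine setting -/

/-- All the data and axioms describing the setting: `(W,S)` is the Coxeter group of an
untwisted connected affine Dynkin diagram (an irreducible affine Weyl group); `Λ` is the
subgroup of translations (elements with finite conjugacy class), free abelian of finite
rank and of finite index; `s₀` is a hyperspecial vertex, `J = S − {s₀}`, `W_J` is the
finite subgroup generated by `J` with longest element `w_J`; `*` is the involution of `W`
given by `w* = w_J w w_J` on `W_J` and `λ* = −(ʷᴶλ)` on `Λ`; `pr` is the projection
`W → W_J` along `Λ`; `ρ` is the conjugation action of `W` on `Λ_ℚ ≅ ℚ^rank`
(via the identification `freeIso` of `Λ` with `ℤ^rank`). -/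
structure AffineData (cs : CoxeterSystem M W) where
  finB : Finite B
  conn : DiagramConnected M
  infW : Infinite W
  /-- the subgroup `Λ` of translations -/
  Lam : Subgroup W
  hLam_mem : ∀ w : W, w ∈ Lam ↔ {x : W | IsConj w x}.Finite
  hLam_normal : Lam.Normal
  hLam_comm : ∀ a ∈ Lam, ∀ b ∈ Lam, a * b = b * a
  hLam_index : Lam.FiniteIndex
  /-- `Λ` is free abelian of finite rank -/
  rank : ℕ
  freeIso : Lam ≃* Multiplicative (Fin rank → ℤ)
  /-- the hyperspecial vertex `s₀` -/
  s0 : W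
  hs0_S : s0 ∈ Set.range cs.simple
  /-- `s₀` is hyperspecial: the projection `W → W/Λ` restricts to an isomorphism from the
  subgroup generated by `S − {s₀}` onto `W/Λ`. -/
  hs0_hyper : ∀ w : W, ∃! u : W,
    u ∈ Subgroup.closure (Set.range cs.simple \ {s0}) ∧ w * u⁻¹ ∈ Lam
  hWJ_fin : (Subgroup.closure (Set.range cs.simple \ {s0}) : Set W).Finite
  /-- the longest element `w_J` of `W_J` -/
  wJ : W
  hwJ_mem : wJ ∈ Subgroup.closure (Set.range cs.simple \ {s0})
  hwJ_max : ∀ u ∈ Subgroup.closure (Set.range cs.simple \ {s0}), cs.length u ≤ cs.length wJ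
  /-- the involution `*` of `W` -/
  st : MulAut W
  hst_inv : ∀ w : W, st (st w) = w
  hst_J : ∀ u ∈ Subgroup.closure (Set.range cs.simple \ {s0}), st u = wJ * u * wJ
  hst_Lam : ∀ l ∈ Lam, st l = (wJ * l * wJ⁻¹)⁻¹
  hst_S : ∀ s ∈ Set.range cs.simple, st s ∈ Set.range cs.simple
  /-- lower Bruhat intervals are finite -/
  hBruhat_fin : ∀ w : W, {y : W | BruhatLE cs y w}.Finite
  /-- the projection `W → W_J` along `Λ` (`w ↦ w̄`) -/
  pr : W → W
  hpr : ∀ w : W, pr w ∈ Subgroup.closure (Set.range cs.simple \ {s0}) ∧ w * (pr w)⁻¹ ∈ Lam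
  /-- the conjugation action of `W` on `Λ_ℚ ≅ ℚ^rank` -/
  rho : W → ((Fin rank → ℚ) →ₗ[ℚ] (Fin rank → ℚ))
  hrho : ∀ (w : W) (l : Lam),
    rho w (fun i => ((Multiplicative.toAdd (freeIso l)) i : ℚ)) =
      fun i => ((Multiplicative.toAdd
        (freeIso ⟨w * (l : W) * w⁻¹, hLam_normal.conj_mem _ l.2 w⟩)) i : ℚ)

namespace AffineData

variable {cs : CoxeterSystem M W} (D : AffineData cs)

/-- The set `J = S − {s₀}`. -/
def Jset : Set W := Set.range cs.simple \ {D.s0}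

/-- The finite Weyl group `W_J`. -/
def WJ : Subgroup W := Subgroup.closure D.Jset

/-- `λ ∈ Λ` is a dominant translation (`λ ∈ Λ⁺`). -/
def IsDominant (l : W) : Prop :=
  l ∈ D.Lam ∧ cs.length (l * D.wJ) = cs.length l + cs.length D.wJ

/-- The embedding `Λ → Λ_ℚ = ℚ^rank`. -/
def iota (l : D.Lam) : Fin D.rank → ℚ :=
  fun i => ((Multiplicative.toAdd (D.freeIso l)) i : ℚ)

/-- `e(A)`: the dimension of the `(−1)`-eigenspace of a linear endomorphism `A` of `Λ_ℚ`. -/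
def eNeg (f : (Fin D.rank → ℚ) →ₗ[ℚ] (Fin D.rank → ℚ)) : ℕ :=
  Module.finrank ℚ (Module.End.eigenspace (f : Module.End ℚ (Fin D.rank → ℚ)) (-1))

/-- The map `A_u : λ ↦ ᵘ(λ*) = −(ᵘʷᴶλ)` on `Λ_ℚ`, for `u ∈ W_J`. -/
def Amap (u : W) : (Fin D.rank → ℚ) →ₗ[ℚ] (Fin D.rank → ℚ) := - D.rho (u * D.wJ)

/-- The invariant `φ(w) = e(A_{w̄}) − e(A_e)` for `w ∈ I_*`. -/
def phi (w : W) : ℤ := (D.eNeg (D.Amap (D.pr w)) : ℤ) - (D.eNeg (D.Amap 1) : ℤ)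

/-- The double coset `W_J x W_J`. -/
def DCoset (x : W) : Set W := {y : W | ∃ u ∈ D.WJ, ∃ v ∈ D.WJ, y = u * x * v}

/-- The set `H = J ∩ bJb⁻¹`. -/
def Hset (b : W) : Set W := D.Jset ∩ ((fun s => b * s * b⁻¹) '' D.Jset)

/-- The set `H* ⊆ J`, image of `H` under `*`. -/
def Hstar (b : W) : Set W := (⇑D.st) '' D.Hset b

/-- The subgroup `W_{H*}` generated by `H*`. -/
def WHstar (b : W) : Subgroup W := Subgroup.closure (D.Hstar b)

/-- The reflection representation `R'` of `W_{H*}`, as a subspace of `Λ_ℚ`: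
the span of the vectors `λ − ˢλ` for `λ ∈ Λ`, `s ∈ H*`. -/
def Rprime (b : W) : Submodule ℚ (Fin D.rank → ℚ) :=
  Submodule.span ℚ
    {v : Fin D.rank → ℚ | ∃ l : D.Lam, ∃ s ∈ D.Hstar b,
      v = D.iota l - D.iota ⟨s * (l : W) * s⁻¹, D.hLam_normal.conj_mem _ l.2 s⟩}

/-- `e'(A)`: the dimension of the `(−1)`-eigenspace of an endomorphism `A` of `R'`. -/
def eNeg' {b : W} (f : ↥(D.Rprime b) →ₗ[ℚ] ↥(D.Rprime b)) : ℕ :=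
  Module.finrank ℚ (Module.End.eigenspace (f : Module.End ℚ ↥(D.Rprime b)) (-1))

/-- `φ'(z) = e'(B_z) − e'(B_e)`, where `B_u : x ↦ −u·(w_{H*}·x)` on `R'`; here
`rho'` is the conjugation action of `W_{H*}` on `R'` and `wHs` is the longest element
of `W_{H*}`. -/
def phiP {b : W} (rho' : W → (↥(D.Rprime b) →ₗ[ℚ] ↥(D.Rprime b))) (wHs z : W) : ℤ :=
  (D.eNeg' (-(rho' (z * wHs))) : ℤ) - (D.eNeg' (-(rho' wHs)) : ℤ)

/-- Membership in `A_Λ ⊆ A = Aut(W,S)`: automorphisms acting on `Λ` as conjugation by some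
element of `W_J`. -/
def InALam (a : MulAut W) : Prop :=
  IsDiagAut cs a ∧ ∃ w ∈ D.WJ, ∀ l ∈ D.Lam, a l = w * l * w⁻¹

/-- Membership in the coset `A_Λ* = {a ∘ * : a ∈ A_Λ}`. -/
def InALamStar (c : MulAut W) : Prop := ∃ a : MulAut W, D.InALam a ∧ c = a * D.st

/-- The double coset `W_J x W_J^◇`, where `W_J^◇` is the subgroup generated by
`J^◇ = S − {s₁}`. -/
def DCosetDia (s1 : W) (x : W) : Set W :=
  {y : W | ∃ u ∈ D.WJ, ∃ v ∈ Subgroup.closure (Set.range cs.simple \ {s1}), y = u * x * v}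


end AffineData

/-! ## The Hecke algebra, the Lusztig–Vogan module, and the polynomials `P`, `P^σ` -/

/-- The Hecke algebra of `(W,S)` over `ℚ(q)` (modelled on functions `W → ℚ(q)`, with basis
`TT w = T_w`), together with its bar involution, and the Kazhdan–Lusztig polynomials
`P_{y,w} ∈ ℤ[q]` characterized by their defining properties. -/
structure HeckeData (cs : CoxeterSystem M W) where
  /-- the involution `q ↦ q⁻¹` of `ℚ(q)` -/
  barK : K →+* K
  hbarK_X : barK qK = qK⁻¹
  hbarK_inv : ∀ x, barK (barK x) = x
  /-- the multiplication of the Hecke algebra -/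
  mulH : (W → K) →ₗ[K] (W → K) →ₗ[K] (W → K)
  hmul_assoc : ∀ x y z : W → K, mulH (mulH x y) z = mulH x (mulH y z)
  hmul_one : ∀ x : W → K, mulH (TT 1) x = x ∧ mulH x (TT 1) = x
  hmul_TT : ∀ u v : W, cs.length (u * v) = cs.length u + cs.length v →
    mulH (TT u) (TT v) = TT (u * v)
  hmul_Ts : ∀ s ∈ Set.range cs.simple,
    mulH (TT s) (TT s) = (qK - 1) • TT s + qK • TT (1 : W)
  /-- the bar involution of the Hecke algebra: the ring involution with `q ↦ q⁻¹`,
  `T_w ↦ (T_{w⁻¹})⁻¹` -/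
  barH : (W → K) →+ (W → K)
  hbarH_inv : ∀ x, barH (barH x) = x
  hbarH_smul : ∀ (c : K) (x : W → K), barH (c • x) = barK c • barH x
  hbarH_mul : ∀ x y : W → K, barH (mulH x y) = mulH (barH x) (barH y)
  hbarH_T : ∀ w : W, mulH (barH (TT w)) (TT w⁻¹) = TT (1 : W) ∧
    mulH (TT w⁻¹) (barH (TT w)) = TT (1 : W)
  /-- the Kazhdan–Lusztig polynomials `P_{y,w}` -/
  P : W → W → Polynomial ℤ
  hP_supp : ∀ y w : W, ¬ BruhatLE cs y w → P y w = 0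
  hP_diag : ∀ w : W, P w w = 1
  hP_deg : ∀ y w : W, BruhatLE cs y w → y ≠ w →
    2 * (P y w).natDegree + 1 ≤ cs.length w - cs.length y
  hP_dual : ∀ w : W,
    (qK ^ cs.length w) • barH (fun y => if BruhatLE cs y w then toK (P y w) else 0)
      = fun y => if BruhatLE cs y w then toK (P y w) else 0

/-- The Lusztig–Vogan module `M` over the Hecke algebra `H'` with parameter `q²`, attached to
a length-preserving involutive automorphism `star` of `(W,S)`, together with its bar
involution, and the polynomials `P^σ_{y,w} ∈ ℤ[q]` (for `y, w ∈ I_*`) characterized by their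
defining properties.  Both `H'` and `M` are modelled on functions `W → ℚ(q)`; the basis
element `a_w` of `M` (for `w ∈ I_*`) is `TT w`. -/
structure LVData (cs : CoxeterSystem M W) (star : MulAut W) where
  /-- the involution `q ↦ q⁻¹` of `ℚ(q)` -/
  barK : K →+* K
  hbarK_X : barK qK = qK⁻¹
  hbarK_inv : ∀ x, barK (barK x) = x
  /-- the multiplication of the Hecke algebra `H'` with parameter `q²` -/
  mulH' : (W → K) →ₗ[K] (W → K) →ₗ[K] (W → K)
  hmul'_assoc : ∀ x y z : W → K, mulH' (mulH' x y) z = mulH' x (mulH' y z)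
  hmul'_one : ∀ x : W → K, mulH' (TT 1) x = x ∧ mulH' x (TT 1) = x
  hmul'_TT : ∀ u v : W, cs.length (u * v) = cs.length u + cs.length v →
    mulH' (TT u) (TT v) = TT (u * v)
  hmul'_Ts : ∀ s ∈ Set.range cs.simple,
    mulH' (TT s) (TT s) = (qK ^ 2 - 1) • TT s + (qK ^ 2) • TT (1 : W)
  /-- the bar involution of `H'` -/
  barH' : (W → K) →+ (W → K)
  hbarH'_inv : ∀ x, barH' (barH' x) = x
  hbarH'_smul : ∀ (c : K) (x : W → K), barH' (c • x) = barK c • barH' x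
  hbarH'_mul : ∀ x y : W → K, barH' (mulH' x y) = mulH' (barH' x) (barH' y)
  hbarH'_T : ∀ w : W, mulH' (barH' (TT w)) (TT w⁻¹) = TT (1 : W) ∧
    mulH' (TT w⁻¹) (barH' (TT w)) = TT (1 : W)
  /-- the action of `H'` on the module `M` -/
  actM : (W → K) →ₗ[K] (W → K) →ₗ[K] (W → K)
  hact_one : ∀ m : W → K, actM (TT 1) m = m
  hact_mul : ∀ (h h' : W → K) (m : W → K), actM (mulH' h h') m = actM h (actM h' m)
  hact1 : ∀ s ∈ Set.range cs.simple, ∀ w : W, star w = w⁻¹ →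
    s * w = w * star s → cs.length w < cs.length (s * w) →
    actM (TT s) (TT w) = qK • TT w + (qK + 1) • TT (s * w)
  hact2 : ∀ s ∈ Set.range cs.simple, ∀ w : W, star w = w⁻¹ →
    s * w = w * star s → cs.length (s * w) < cs.length w →
    actM (TT s) (TT w) = (qK ^ 2 - qK - 1) • TT w + (qK ^ 2 - qK) • TT (s * w)
  hact3 : ∀ s ∈ Set.range cs.simple, ∀ w : W, star w = w⁻¹ →
    s * w ≠ w * star s → cs.length w < cs.length (s * w) →
    actM (TT s) (TT w) = TT (s * w * star s)
  hact4 : ∀ s ∈ Set.range cs.simple, ∀ w : W, star w = w⁻¹ →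
    s * w ≠ w * star s → cs.length (s * w) < cs.length w →
    actM (TT s) (TT w) = (qK ^ 2 - 1) • TT w + (qK ^ 2) • TT (s * w * star s)
  /-- the bar involution of the module `M` -/
  barM : (W → K) →+ (W → K)
  hbarM_inv : ∀ m : W → K, barM (barM m) = m
  hbarM_smul : ∀ (c : K) (m : W → K), barM (c • m) = barK c • barM m
  hbarM_act : ∀ (h m : W → K), barM (actM h m) = actM (barH' h) (barM m)
  hbarM_one : barM (TT 1) = TT (1 : W)
  /-- the Lusztig–Vogan polynomials `P^σ_{y,w}` -/
  Psig : W → W → Polynomial ℤ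
  hPsig_supp : ∀ y w : W, ¬ (BruhatLE cs y w ∧ star y = y⁻¹) → Psig y w = 0
  hPsig_diag : ∀ w : W, star w = w⁻¹ → Psig w w = 1
  hPsig_deg : ∀ y w : W, star w = w⁻¹ → star y = y⁻¹ → BruhatLE cs y w → y ≠ w →
    2 * (Psig y w).natDegree + 1 ≤ cs.length w - cs.length y
  hPsig_dual : ∀ w : W, star w = w⁻¹ →
    (qK ^ (2 * cs.length w)) •
        barM (fun y => if BruhatLE cs y w ∧ star y = y⁻¹ then toK (Psig y w) else 0)
      = fun y => if BruhatLE cs y w ∧ star y = y⁻¹ then toK (Psig y w) else 0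

/-! ## The `Z`-polynomials -/

/-- `Z_w(q) = Σ_{y ≤ w} P_{y,w}(q) q^{ℓ(y)}`. -/
def Zpoly (cs : CoxeterSystem M W) (HD : HeckeData cs) (w : W) : K :=
  ∑ᶠ y : W, if BruhatLE cs y w then toK (HD.P y w) * qK ^ cs.length y else 0

/-- `Z_w(−q) = Σ_{y ≤ w} P_{y,w}(−q) (−q)^{ℓ(y)}`. -/
def ZpolyNeg (cs : CoxeterSystem M W) (HD : HeckeData cs) (w : W) : K :=
  ∑ᶠ y : W, if BruhatLE cs y w then atNegQ (HD.P y w) * (-qK) ^ cs.length y else 0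

/-- `Z^σ_w(q) = Σ_{y ≤ w, y ∈ I_*} P^σ_{y,w}(q) q^{ℓ(y)} ((q−1)/(q+1))^{φ(y)}`. -/
def Zsig (cs : CoxeterSystem M W) (D : AffineData cs) (LD : LVData cs D.st) (w : W) : K :=
  ∑ᶠ y : W, if BruhatLE cs y w ∧ D.st y = y⁻¹ then
    toK (LD.Psig y w) * qK ^ cs.length y * ((qK - 1) / (qK + 1)) ^ D.phi y else 0

section Aux

variable {B W : Type} [Group W] {M : CoxeterMatrix B} (cs : CoxeterSystem M W)

/-- The elementary signed-conjugation map attached to `s`. -/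
def sgnStep (s : W) : Function.End (W × ZMod 2) :=
  fun p => (s * p.1 * s⁻¹, p.2 + if p.1 = s then 1 else 0)

theorem sgnStep_pow (a b : W) (ha : a * a = 1) (hb : b * b = 1) (n : ℕ) (r : W) (e : ZMod 2) :
    ((sgnStep a * sgnStep b) ^ n) (r, e) =
      ((a * b) ^ n * r * ((a * b) ^ n)⁻¹,
        e + ∑ k ∈ Finset.range (2 * n), if r = b * (a * b) ^ k then 1 else 0) := by
  have ha' : a⁻¹ = a := inv_eq_of_mul_eq_one_left ha
  have hb' : b⁻¹ = b := inv_eq_of_mul_eq_one_left hb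
  have key : ∀ n : ℕ, (a * b) ^ n * b * (a * b) ^ n = b := by
    intro n
    induction n with
    | zero => simp
    | succ n ih =>
      calc (a * b) ^ (n + 1) * b * (a * b) ^ (n + 1)
          = a * b * ((a * b) ^ n * b * (a * b) ^ n) * (a * b) := by
            rw [pow_succ' (a * b) n]
            nth_rewrite 2 [← pow_succ' (a * b) n]
            rw [pow_succ (a * b) n]; simp only [mul_assoc]
        _ = a * (b * b) * a * b := by rw [ih]; simp only [mul_assoc]
        _ = b := by rw [hb, mul_one, ha, one_mul]
  have key2 : ∀ n : ℕ, b * (a * b) ^ n = ((a * b) ^ n)⁻¹ * b := by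
    intro n
    rw [eq_inv_mul_iff_mul_eq, ← mul_assoc]; exact key n
  induction n with
  | zero => simp; rfl
  | succ n ih =>
    rw [pow_succ']
    change sgnStep a (sgnStep b (((sgnStep a * sgnStep b) ^ n) (r, e))) = _
    rw [ih]
    have h1 : ((a * b) ^ n * r * ((a * b) ^ n)⁻¹ = b) ↔ r = b * (a * b) ^ (2 * n) := by
      rw [two_mul, pow_add, ← mul_assoc, key2, mul_inv_eq_iff_eq_mul, mul_assoc,
        ← eq_inv_mul_iff_mul_eq]
    have h2 : (b * ((a * b) ^ n * r * ((a * b) ^ n)⁻¹) * b⁻¹ = a) ↔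
        r = b * (a * b) ^ (2 * n + 1) := by
      have : b * (a * b) ^ (2 * n + 1) = ((a * b) ^ n)⁻¹ * (b * a * b) * (a * b) ^ n := by
        rw [two_mul, add_assoc, pow_add, ← mul_assoc, key2, pow_succ']; simp only [mul_assoc]
      rw [this]
      constructor
      · intro h
        rw [hb'] at h
        have h' : b * a * b = b * (b * ((a * b) ^ n * r * ((a * b) ^ n)⁻¹) * b) * b := by rw [h]
        rw [h']
        calc r = ((a * b) ^ n)⁻¹ * ((a * b) ^ n * r * ((a * b) ^ n)⁻¹) * (a * b) ^ n := by group
          _ = ((a * b) ^ n)⁻¹ * ((b * b) * ((a * b) ^ n * r * ((a * b) ^ n)⁻¹) * (b * b)) *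
              (a * b) ^ n := by rw [hb, one_mul, mul_one]
          _ = _ := by simp only [mul_assoc]
      · intro h; rw [h, hb']
        calc _ = (b * b) * a * (b * b) := by group
          _ = a := by rw [hb, one_mul, mul_one]
    rw [show 2 * (n + 1) = 2 * n + 1 + 1 by ring, Finset.sum_range_succ, Finset.sum_range_succ]
    simp only [sgnStep, h1, h2]
    refine Prod.ext ?_ ?_
    · simp only [pow_succ', mul_inv_rev, mul_assoc]
    · simp only [add_assoc]

theorem sgn_liftable : M.IsLiftable (fun i => sgnStep (cs.simple i)) := by
  intro i j
  funext ⟨r, e⟩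
  rw [sgnStep_pow _ _ (by simp) (by simp), cs.simple_mul_simple_pow]
  have : (∑ k ∈ Finset.range (2 * M i j),
      if r = cs.simple j * (cs.simple i * cs.simple j) ^ k then (1 : ZMod 2) else 0) = 0 := by
    rw [two_mul, Finset.sum_range_add]
    simp only [pow_add, cs.simple_mul_simple_pow, one_mul]
    exact CharTwo.add_self_eq_zero _
  rw [this]
  simp; rfl

/-- The signed conjugation action. -/
def sgnHom : W →* Function.End (W × ZMod 2) := cs.lift ⟨_, sgn_liftable cs⟩

/-- The sign cocycle. -/
def eta (w r : W) : ZMod 2 := (sgnHom cs w (r, 0)).2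

theorem sgnHom_apply (w r : W) (e : ZMod 2) :
    sgnHom cs w (r, e) = (w * r * w⁻¹, e + eta cs w r) := by
  have h : ∀ w : W, ∀ r e, (sgnHom cs w (r, e)).1 = w * r * w⁻¹ ∧
      (sgnHom cs w (r, e)).2 = e + (sgnHom cs w (r, 0)).2 := by
    intro w
    induction w using cs.simple_induction_left with
    | one =>
      intro r e
      rw [map_one]
      change r = 1 * r * 1⁻¹ ∧ e = e + 0
      simp
    | mul_simple_left w i ih =>
      intro r e
      rw [map_mul]
      have hs : sgnHom cs (cs.simple i) = sgnStep (cs.simple i) := cs.lift_apply_simple _ i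
      rw [hs]
      change (sgnStep _ (sgnHom cs w (r, e))).1 = _ ∧ (sgnStep _ (sgnHom cs w (r, e))).2 =
        e + (sgnStep _ (sgnHom cs w (r, 0))).2
      simp only [sgnStep]
      rw [(ih r e).1, (ih r e).2, (ih r 0).1]
      refine ⟨by group, by rw [add_assoc]⟩
  exact Prod.ext (h w r e).1 (h w r e).2

theorem eta_simple (i : B) (r : W) :
    eta cs (cs.simple i) r = if r = cs.simple i then 1 else 0 := by
  have hs : sgnHom cs (cs.simple i) = sgnStep (cs.simple i) := cs.lift_apply_simple _ i
  simp [eta, hs, sgnStep]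

theorem eta_one (r : W) : eta cs 1 r = 0 := by
  unfold eta; rw [map_one]; rfl

theorem eta_mul (u v r : W) : eta cs (u * v) r = eta cs v r + eta cs u (v * r * v⁻¹) := by
  have : sgnHom cs (u * v) (r, 0) = sgnHom cs u (sgnHom cs v (r, 0)) := by rw [map_mul]; rfl
  rw [sgnHom_apply, sgnHom_apply, sgnHom_apply] at this
  simpa using congrArg Prod.snd this

theorem mem_ris (ω : List B) (r : W) (h : eta cs (cs.wordProd ω) r ≠ 0) :
    r ∈ cs.rightInvSeq ω := by
  induction ω with
  | nil => exact absurd (by simpa using eta_one cs r) h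
  | cons i ω ih =>
    rw [cs.wordProd_cons, eta_mul, eta_simple] at h
    rw [CoxeterSystem.rightInvSeq, List.mem_cons]
    split_ifs at h with h1
    · left
      rw [← h1]; group
    · right; exact ih (by simpa using h)

theorem lt_of_eta (w r : W) (h : eta cs w r ≠ 0) : cs.length (w * r) < cs.length w := by
  obtain ⟨ω, hω, rfl⟩ := cs.exists_isReduced w
  exact (cs.isRightInversion_of_mem_rightInvSeq hω (mem_ris cs ω r h)).2

theorem eta_refl (r : W) (hr : cs.IsReflection r) : eta cs r r = 1 := by
  obtain ⟨u, i, rfl⟩ := hr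
  have h0 := eta_mul cs u u⁻¹ (u * cs.simple i * u⁻¹)
  rw [mul_inv_cancel, eta_one] at h0
  have e1 : u⁻¹ * (u * cs.simple i * u⁻¹) * u⁻¹⁻¹ = cs.simple i := by group
  rw [e1] at h0
  rw [eta_mul, e1, eta_mul, eta_simple]
  have e2 : cs.simple i * cs.simple i * (cs.simple i)⁻¹ = cs.simple i := by group
  rw [e2, if_pos rfl]
  calc _ = (eta cs u⁻¹ (u * cs.simple i * u⁻¹) + eta cs u (cs.simple i)) + 1 := by ring
    _ = 1 := by rw [← h0, zero_add]

theorem eta_ne_of_lt (w r : W) (hr : cs.IsReflection r) (h : cs.length (w * r) < cs.length w) :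
    eta cs w r ≠ 0 := by
  intro h0
  have h1 : eta cs (w * r) r ≠ 0 := by
    rw [eta_mul, eta_refl cs r hr]
    have : r * r * r⁻¹ = r := by group
    rw [this, h0]; decide
  have := lt_of_eta cs _ _ h1
  rw [mul_assoc, hr.mul_self, mul_one] at this
  omega

theorem desc_step (y u : W) (i : B) (h1 : cs.length (y * u⁻¹) + cs.length u = cs.length y)
    (h2 : cs.length (y * cs.simple i) < cs.length y)
    (h3 : cs.length u < cs.length (u * cs.simple i)) :
    cs.length (y * (u * cs.simple i)⁻¹) + cs.length (u * cs.simple i) = cs.length y := by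
  have hy := eta_ne_of_lt cs y _ (cs.isReflection_simple i) h2
  have hu : eta cs u (cs.simple i) = 0 := by
    by_contra h
    have := lt_of_eta cs _ _ h
    omega
  have e := eta_mul cs (y * u⁻¹) u (cs.simple i)
  rw [inv_mul_cancel_right, hu, zero_add] at e
  rw [e] at hy
  have hz := lt_of_eta cs _ _ hy
  have e2 : y * u⁻¹ * (u * cs.simple i * u⁻¹) = y * (u * cs.simple i)⁻¹ := by
    rw [mul_inv_rev, cs.inv_simple]; group
  rw [e2] at hz
  have h4 := cs.length_mul_simple u i
  have h5 := cs.length_mul_le (y * (u * cs.simple i)⁻¹) (u * cs.simple i)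
  rw [inv_mul_cancel_right] at h5
  omega

theorem finite_of_all_desc [Finite B] (x : W)
    (h : ∀ i, cs.length (x * cs.simple i) < cs.length x) : Finite W := by
  have hP : ∀ ω : List B, cs.IsReduced ω →
      cs.length (x * (cs.wordProd ω)⁻¹) + cs.length (cs.wordProd ω) = cs.length x := by
    intro ω
    induction ω using List.reverseRecOn with
    | nil => intro _; simp
    | append_singleton ω i ih =>
      intro hω
      have hω' : cs.IsReduced ω := by
        have := hω.take ω.length
        simpa using this
      rw [cs.wordProd_append, cs.wordProd_singleton]
      refine desc_step cs x _ i (ih hω') (h i) ?_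
      have e1 := hω.eq
      rw [cs.wordProd_append, cs.wordProd_singleton] at e1
      rw [e1, hω'.eq]; simp
  have hfin := (List.finite_length_le B (cs.length x)).image cs.wordProd
  refine Set.finite_univ_iff.mp (hfin.subset ?_)
  intro w _
  obtain ⟨ω, hω, rfl⟩ := cs.exists_isReduced w
  refine ⟨ω, ?_, rfl⟩
  have := hP ω hω
  rw [hω.eq] at this
  change ω.length ≤ _
  omega

theorem comm_of_desc (x : W) (i j i' j' : B)
    (hi : x * cs.simple i = cs.simple i' * x) (hj : x * cs.simple j = cs.simple j' * x)
    (h1 : cs.length (x * cs.simple i) < cs.length x)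
    (h2 : cs.length x < cs.length (x * cs.simple j)) :
    cs.simple i * cs.simple j = cs.simple j * cs.simple i := by
  by_contra hne
  have l2 := cs.length_mul_simple x j
  have l1 := cs.length_mul_simple x i
  have d1 : cs.length (x * cs.simple j * cs.simple j) < cs.length (x * cs.simple j) := by
    simpa using h2
  have d2 : cs.length (x * cs.simple j * cs.simple i) < cs.length (x * cs.simple j) := by
    rw [hj, mul_assoc]
    have := cs.length_simple_mul (x * cs.simple i) j'
    rw [← hj]
    omega
  have p1 := desc_step cs (x * cs.simple j) 1 j (by simp) d1 (by simp)
  rw [one_mul] at p1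
  have l3 : cs.length (cs.simple j) < cs.length (cs.simple j * cs.simple i) := by
    rcases cs.length_mul_simple (cs.simple j) i with h | h
    · omega
    · rw [cs.length_simple] at h
      have h0 : cs.length (cs.simple j * cs.simple i) = 0 := by omega
      rw [cs.length_eq_zero_iff, mul_eq_one_iff_eq_inv, cs.inv_simple] at h0
      exact absurd (by rw [h0]) hne
  have p2 := desc_step cs _ _ i p1 d2 l3
  have l4 : cs.length (cs.simple j * cs.simple i) <
      cs.length (cs.simple j * cs.simple i * cs.simple j) := by
    by_contra hc
    have l5 := cs.length_mul_simple (cs.simple j * cs.simple i) j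
    have := eta_ne_of_lt cs (cs.simple j * cs.simple i) _ (cs.isReflection_simple j) (by omega)
    rw [eta_mul, eta_simple, eta_simple] at this
    have hji : cs.simple j ≠ cs.simple i := fun h => hne (by rw [h])
    rw [if_neg hji, zero_add] at this
    split_ifs at this with h
    · rw [mul_inv_eq_iff_eq_mul] at h
      exact hne h
    · exact this rfl
  have p3 := desc_step cs _ _ j p2 d1 l4
  have e : x * cs.simple j * (cs.simple j * cs.simple i * cs.simple j)⁻¹ =
      cs.simple i' * (x * cs.simple j) := by
    rw [← mul_assoc, ← hi]
    simp [mul_inv_rev, mul_assoc]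
  rw [e] at p3
  have l6 := cs.length_simple_mul (x * cs.simple j) i'
  have l7 := cs.length_mul_simple (cs.simple j) i
  have l8 := cs.length_mul_simple (cs.simple j * cs.simple i) j
  have l9 := cs.length_simple j
  omega

variable {cs} (D : AffineData cs)

theorem mem_Lam_of_centralizes (y : W) (h : ∀ l ∈ D.Lam, y * l = l * y) : y ∈ D.Lam := by
  rw [D.hLam_mem]
  have := D.hLam_index
  have hf : Finite (W ⧸ D.Lam) := Subgroup.finite_quotient_of_finiteIndex
  refine (Set.finite_range (fun q : W ⧸ D.Lam => q.out * y * q.out⁻¹)).subset ?_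
  rintro x hx
  obtain ⟨g, rfl⟩ := isConj_iff.mp hx
  refine ⟨(g : W ⧸ D.Lam), ?_⟩
  obtain ⟨l, hl⟩ := QuotientGroup.mk_out_eq_mul D.Lam g
  change Quotient.out _ * y * (Quotient.out _)⁻¹ = _
  rw [hl, mul_assoc g, ← h l l.2]; group

theorem eq_one_of_Lam_WJ (y : W) (h1 : y ∈ D.Lam) (h2 : y ∈ D.WJ) : y = 1 := by
  obtain ⟨u, _, hu⟩ := D.hs0_hyper y
  rw [hu y ⟨h2, by rw [mul_inv_cancel]; exact D.Lam.one_mem⟩,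
    hu 1 ⟨Subgroup.one_mem _, by simpa using h1⟩]

/-- A set of simple reflections avoiding `s₀` and commuting with all the others is empty. -/
theorem block_empty (P : B → Prop)
    (hc : ∀ i j, P i → ¬ P j → cs.simple i * cs.simple j = cs.simple j * cs.simple i)
    (h0 : ∀ i, P i → cs.simple i ≠ D.s0) : ∀ i, ¬ P i := by
  intro i hi
  set H : Subgroup W := Subgroup.closure (cs.simple '' {i | P i}) with hH
  have hHJ : H ≤ D.WJ := by
    apply Subgroup.closure_mono
    rintro _ ⟨k, hk, rfl⟩
    exact ⟨⟨k, rfl⟩, h0 k hk⟩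
  have hHfin : (H : Set W).Finite := D.hWJ_fin.subset hHJ
  have hnorm : ∀ g : W, ∀ y ∈ H, g * y * g⁻¹ ∈ H := by
    intro g
    induction g using cs.simple_induction_left with
    | one => intro y hy; simpa using hy
    | mul_simple_left g k ih =>
      intro y hy
      have hy' := ih y hy
      have e : cs.simple k * g * y * (cs.simple k * g)⁻¹ =
          cs.simple k * (g * y * g⁻¹) * (cs.simple k)⁻¹ := by group
      rw [e]
      by_cases hk : P k
      · have hkH : cs.simple k ∈ H := Subgroup.subset_closure ⟨k, hk, rfl⟩
        exact H.mul_mem (H.mul_mem hkH hy') (H.inv_mem hkH)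
      · have hcen : ∀ z ∈ H, cs.simple k * z * (cs.simple k)⁻¹ = z := by
          intro z hz
          induction hz using Subgroup.closure_induction with
          | mem z hz =>
            obtain ⟨m, hm, rfl⟩ := hz
            rw [← hc m k hm hk, mul_inv_cancel_right]
          | one => simp
          | mul a b _ _ iha ihb =>
            calc _ = (cs.simple k * a * (cs.simple k)⁻¹) * (cs.simple k * b * (cs.simple k)⁻¹) := by
                  group
              _ = a * b := by rw [iha, ihb]
          | inv a _ iha =>
            calc _ = (cs.simple k * a * (cs.simple k)⁻¹)⁻¹ := by group
              _ = a⁻¹ := by rw [iha]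
        rw [hcen _ hy']; exact hy'
  have hiH : cs.simple i ∈ H := Subgroup.subset_closure ⟨i, hi, rfl⟩
  have hL : cs.simple i ∈ D.Lam := by
    rw [D.hLam_mem]
    refine hHfin.subset ?_
    rintro x hx
    obtain ⟨g, rfl⟩ := isConj_iff.mp hx
    exact hnorm g _ hiH
  have h1 := eq_one_of_Lam_WJ D _ hL (hHJ hiH)
  have := cs.length_simple i
  rw [h1, cs.length_one] at this
  omega

theorem eq_one_of_normalizes (D : AffineData cs) (x : W)
    (hx : ∀ i, ∃ i', x * cs.simple i * x⁻¹ = cs.simple i') : x = 1 := by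
  have := D.finB
  have hx' : ∀ i, ∃ i', x * cs.simple i = cs.simple i' * x := by
    intro i
    obtain ⟨i', h⟩ := hx i
    exact ⟨i', mul_inv_eq_iff_eq_mul.mp h⟩
  have hcomm : ∀ i j, cs.length (x * cs.simple i) < cs.length x →
      ¬ cs.length (x * cs.simple j) < cs.length x →
      cs.simple i * cs.simple j = cs.simple j * cs.simple i := by
    intro i j hi hj
    obtain ⟨i', hi'⟩ := hx' i
    obtain ⟨j', hj'⟩ := hx' j
    refine comm_of_desc cs x i j i' j' hi' hj' hi ?_
    have := cs.length_mul_simple x j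
    omega
  by_cases h0 : ∃ i, cs.simple i = D.s0 ∧ cs.length (x * cs.simple i) < cs.length x
  · exfalso
    obtain ⟨i0, hi0, hd⟩ := h0
    have := block_empty D (fun i => ¬ cs.length (x * cs.simple i) < cs.length x)
      (fun i j hi hj => (hcomm j i (not_not.mp hj) hi).symm)
      (fun i hi h => hi (by rw [h, ← hi0]; exact hd))
    have hfin : Finite W := finite_of_all_desc cs x (fun i => not_not.mp (this i))
    exact D.infW.not_finite hfin
  · have := block_empty D (fun i => cs.length (x * cs.simple i) < cs.length x) hcomm
      (fun i hi h => h0 ⟨i, h, hi⟩)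
    by_contra hne
    obtain ⟨i, hi⟩ := cs.exists_rightDescent_of_ne_one hne
    exact this i hi

theorem sq_eq_one (c : MulAut W) (hS : ∀ i, ∃ j, c (cs.simple i) = cs.simple j) (v : W)
    (hc : ∀ l ∈ D.Lam, c l = (v * l * v⁻¹)⁻¹) : c * c = 1 := by
  have hsplit : ∀ y : W, v⁻¹ * c y * v * y⁻¹ ∈ D.Lam := by
    intro y
    have hz : y⁻¹ * (v⁻¹ * c y * v) ∈ D.Lam := by
      apply mem_Lam_of_centralizes
      intro l hl
      have h1 := hc _ (D.hLam_normal.conj_mem l hl y)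
      rw [map_mul, map_mul, map_inv, hc l hl] at h1
      have h2 : c y * (v * l * v⁻¹) * (c y)⁻¹ = v * (y * l * y⁻¹) * v⁻¹ := by
        rw [← inv_inj, ← h1]; group
      have h3 : c y * v * l = v * y * l * y⁻¹ * v⁻¹ * c y * v := by
        calc c y * v * l = (c y * (v * l * v⁻¹) * (c y)⁻¹) * (c y * v) := by group
          _ = _ := by rw [h2]; group
      calc _ = y⁻¹ * v⁻¹ * (c y * v * l) := by group
        _ = _ := by rw [h3]; group
    have := D.hLam_normal.conj_mem _ hz y
    convert this using 1
    group
  have hcc : ∀ y, c (c y) = (c v * v) * y * (c v * v)⁻¹ := by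
    intro y
    have h1 := hc _ (hsplit y)
    simp only [map_mul, map_inv] at h1
    have h2 : c (c y) = c v * (v * (v⁻¹ * c y * v * y⁻¹) * v⁻¹)⁻¹ * c y * (c v)⁻¹ := by
      rw [← h1]; group
    rw [h2]; group
  have hx1 : c v * v = 1 := by
    apply eq_one_of_normalizes D
    intro i
    obtain ⟨j, hj⟩ := hS i
    obtain ⟨k, hk⟩ := hS j
    exact ⟨k, by rw [← hcc, hj, hk]⟩
  ext y
  change c (c y) = y
  rw [hcc, hx1]; simp

theorem InALam_inv (a : MulAut W) (ha : D.InALam a) : D.InALam a⁻¹ := by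
  obtain ⟨hS, w, hw, h⟩ := ha
  refine ⟨?_, w⁻¹, D.WJ.inv_mem hw, ?_⟩
  · unfold IsDiagAut at hS ⊢
    conv_lhs => rw [← hS]
    rw [← Set.image_comp]
    convert Set.image_id _
    ext y
    exact a.symm_apply_apply y
  · intro l hl
    have h1 := h _ (D.hLam_normal.conj_mem l hl w⁻¹)
    have h2 : a (w⁻¹ * l * w⁻¹⁻¹) = l := by rw [h1]; group
    have h3 : a⁻¹ (a (w⁻¹ * l * w⁻¹⁻¹)) = w⁻¹ * l * w⁻¹⁻¹ := a.symm_apply_apply _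
    rw [h2] at h3
    exact h3

theorem star_sq (a : MulAut W) (ha : D.InALam a) : a * D.st * (a * D.st) = 1 := by
  obtain ⟨hS, w, hw, h⟩ := ha
  refine sq_eq_one D _ ?_ (w * D.wJ) ?_
  · intro i
    have h1 : a (D.st (cs.simple i)) ∈ Set.range cs.simple := by
      rw [← hS]
      exact ⟨_, D.hst_S _ ⟨i, rfl⟩, rfl⟩
    obtain ⟨j, hj⟩ := h1
    exact ⟨j, hj.symm⟩
  · intro l hl
    change a (D.st l) = _
    rw [D.hst_Lam l hl, map_inv, h _ (D.hLam_normal.conj_mem l hl _)]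
    group

end Aux

/-- Every element of the coset `A_Λ* = {a ∘ * : a ∈ A_Λ} ⊆ Aut(W,S)` has
order at most two (is an involution); moreover `A_Λ* = *A_Λ`. -/
theorem coset_ALam_star_involutions (cs : CoxeterSystem M W) (D : AffineData cs) :
    (∀ c : MulAut W, D.InALamStar c → c * c = 1)
      ∧ {c : MulAut W | D.InALamStar c}
          = {c : MulAut W | ∃ a : MulAut W, D.InALam a ∧ c = D.st * a} := by
  have hst : D.st * D.st = 1 := by
    ext w
    exact D.hst_inv w
  refine ⟨?_, ?_⟩
  · rintro c ⟨a, ha, rfl⟩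
    exact star_sq D a ha
  · ext c
    constructor
    · rintro ⟨a, ha, rfl⟩
      refine ⟨a⁻¹, InALam_inv D a ha, ?_⟩
      have h := star_sq D a ha
      rw [eq_comm, ← mul_right_inj (a * D.st)]
      calc a * D.st * (D.st * a⁻¹) = a * (D.st * D.st) * a⁻¹ := by simp only [mul_assoc]
        _ = a * D.st * (a * D.st) := by rw [hst, h]; group
    · rintro ⟨a, ha, rfl⟩
      refine ⟨a⁻¹, InALam_inv D a ha, ?_⟩
      have h := star_sq D a⁻¹ (InALam_inv D a ha)
      rw [← mul_right_inj (a⁻¹ * D.st), h]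
      calc a⁻¹ * D.st * (D.st * a) = a⁻¹ * (D.st * D.st) * a := by simp only [mul_assoc]
        _ = 1 := by rw [hst]; group

end LY
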